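/- arXiv:2312.10710 — 2 statements merged into one kernel-verified Lean document; each statement's English description precedes it below -/
import Mathlib

section
/- For real parameters θ¹, θ² with θ¹+θ² > 0 and θ¹−θ² > 0, the third central moment of the beta-logistic distribution is ∫_{ℝ} (x − μ)³ · p(x;θ¹,θ²) dx = (1/8)·(ψ''((θ¹+θ²)/2) − ψ''((θ¹−θ²)/2)), where μ = (1/2)(ψ((θ¹+θ²)/2) − ψ((θ¹−θ²)/2)). -/
open MeasureTheory

/-- The hyperbolic secant function: `sech x = 2 / (eˣ + e⁻ˣ)`. -/
noncomputable def sech (x : ℝ) : ℝ := 1 / Real.cosh x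

/-- The beta-logistic density. -/
noncomputable def betaLogisticPDF (θ1 θ2 x : ℝ) : ℝ :=
  (2 : ℝ) ^ (1 - θ1) * sech x ^ θ1 * Real.exp (θ2 * x) /
    (Real.Gamma ((θ1 - θ2) / 2) * Real.Gamma ((θ1 + θ2) / 2) / Real.Gamma θ1)

/-- The digamma function `ψ(z) = d/dz log Γ(z)`. -/
noncomputable def digamma (z : ℝ) : ℝ := deriv (fun x => Real.log (Real.Gamma x)) z

/-- The tetragamma function `ψ''(z) = d³/dz³ log Γ(z)`. -/
noncomputable def tetragamma (z : ℝ) : ℝ := iteratedDeriv 3 (fun x => Real.log (Real.Gamma x)) z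

section
open Set ProbabilityTheory

lemma blAux_sech_pos (x : ℝ) : 0 < sech x := by
  unfold sech; exact one_div_pos.2 (Real.cosh_pos x)

lemma blAux_sig (x : ℝ) : Real.sigmoid (2 * x) = sech x / 2 * Real.exp x := by
  have h : Real.cosh x = (Real.exp x + Real.exp (-x)) / 2 := Real.cosh_eq x
  have e : Real.exp (-(2 * x)) = Real.exp (-x) * Real.exp (-x) := by
    rw [← Real.exp_add]; ring_nf
  have e2 : Real.exp x * Real.exp (-x) = 1 := by rw [← Real.exp_add]; simp
  have p1 := Real.exp_pos x
  have p2 := Real.exp_pos (-x)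
  rw [Real.sigmoid_def, sech, h, e]
  field_simp
  linear_combination (-Real.exp (-x)) * e2

lemma blAux_sig' (x : ℝ) : 1 - Real.sigmoid (2 * x) = sech x / 2 * Real.exp (-x) := by
  rw [← Real.sigmoid_neg, show -(2 * x) = 2 * (-x) by ring, blAux_sig]
  simp [sech]

lemma blAux_integrand (a b x : ℝ) :
    |2 * (Real.sigmoid (2 * x) * (1 - Real.sigmoid (2 * x)))| •
      (Real.sigmoid (2 * x) ^ (a - 1) * (1 - Real.sigmoid (2 * x)) ^ (b - 1)) =
    (2 : ℝ) ^ (1 - (a + b)) * (sech x ^ (a + b) * Real.exp ((a - b) * x)) := by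
  have h1 : 0 < Real.sigmoid (2 * x) := Real.sigmoid_pos _
  have h2 : 0 < 1 - Real.sigmoid (2 * x) := by linarith [Real.sigmoid_lt_one (2 * x)]
  rw [abs_of_pos (by positivity), smul_eq_mul, Real.rpow_sub_one h1.ne', Real.rpow_sub_one h2.ne']
  have : 2 * (Real.sigmoid (2 * x) * (1 - Real.sigmoid (2 * x))) *
      (Real.sigmoid (2 * x) ^ a / Real.sigmoid (2 * x) *
        ((1 - Real.sigmoid (2 * x)) ^ b / (1 - Real.sigmoid (2 * x)))) =
      2 * (Real.sigmoid (2 * x) ^ a * (1 - Real.sigmoid (2 * x)) ^ b) := by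
    field_simp
  rw [this, blAux_sig', blAux_sig]
  have hs := blAux_sech_pos x
  rw [Real.mul_rpow (by positivity) (Real.exp_pos _).le,
    Real.mul_rpow (by positivity) (Real.exp_pos _).le, ← Real.exp_mul, ← Real.exp_mul,
    Real.rpow_sub two_pos, Real.rpow_one]
  have e : Real.exp ((a - b) * x) = Real.exp (x * a) * Real.exp (-x * b) := by
    rw [← Real.exp_add]; ring_nf
  have e3 : (sech x / 2) ^ a * (sech x / 2) ^ b = sech x ^ (a + b) / 2 ^ (a + b) := by
    rw [← Real.rpow_add (by positivity), Real.div_rpow hs.le two_pos.le]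
  rw [e]
  linear_combination (2 * Real.exp (x * a) * Real.exp (-x * b)) * e3

lemma blAux_beta_integrable {a b : ℝ} (ha : 0 < a) (hb : 0 < b) :
    IntegrableOn (fun u : ℝ => u ^ (a - 1) * (1 - u) ^ (b - 1)) (Ioo 0 1) := by
  have h := Complex.betaIntegral_convergent (u := a) (v := b) (by simpa) (by simpa)
  rw [intervalIntegrable_iff_integrableOn_Ioc_of_le (by simp)] at h
  have h' := (h.mono_set Ioo_subset_Ioc_self).re
  refine IntegrableOn.congr_fun h' (fun x hx => ?_) measurableSet_Ioo
  obtain ⟨hx1, hx2⟩ := hx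
  norm_cast
  rw [← Complex.ofReal_cpow, ← Complex.ofReal_cpow, RCLike.re_to_complex,
    Complex.re_mul_ofReal, Complex.ofReal_re]
  all_goals linarith

lemma blAux_beta_integral {a b : ℝ} (ha : 0 < a) (hb : 0 < b) :
    ∫ u in Ioo (0 : ℝ) 1, u ^ (a - 1) * (1 - u) ^ (b - 1) =
      Real.Gamma a * Real.Gamma b / Real.Gamma (a + b) := by
  have h := Complex.betaIntegral_convergent (u := a) (v := b) (by simpa) (by simpa)
  rw [intervalIntegrable_iff_integrableOn_Ioc_of_le (by simp)] at h
  have e : Real.Gamma a * Real.Gamma b / Real.Gamma (a + b) = beta a b := rfl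
  rw [e, beta_eq_betaIntegralReal a b ha hb,
      Complex.betaIntegral, intervalIntegral.integral_of_le (by norm_num),
      ← integral_Ioc_eq_integral_Ioo, ← RCLike.re_to_complex, ← integral_re h]
  refine setIntegral_congr_fun measurableSet_Ioc fun x ⟨hx1, hx₂⟩ ↦ ?_
  norm_cast
  rw [← Complex.ofReal_cpow, ← Complex.ofReal_cpow, RCLike.re_to_complex,
    Complex.re_mul_ofReal, Complex.ofReal_re]
  all_goals linarith

lemma blAux_image : (fun x : ℝ => Real.sigmoid (2 * x)) '' univ = Ioo 0 1 := by
  rw [image_univ, ← Real.range_sigmoid]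
  exact (mul_left_surjective₀ (two_ne_zero (α := ℝ))).range_comp Real.sigmoid

lemma blAux_deriv (x : ℝ) : HasDerivAt (fun x : ℝ => Real.sigmoid (2 * x))
    (2 * (Real.sigmoid (2 * x) * (1 - Real.sigmoid (2 * x)))) x := by
  have := (Real.hasDerivAt_sigmoid (2 * x)).comp x ((hasDerivAt_id x).const_mul 2)
  refine this.congr_deriv ?_
  ring

lemma blAux_inj : InjOn (fun x : ℝ => Real.sigmoid (2 * x)) univ := by
  intro x _ y _ h
  have := Real.sigmoid_injective h
  linarith

lemma blAux_integrable {a b : ℝ} (ha : 0 < a) (hb : 0 < b) :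
    Integrable (fun x : ℝ => sech x ^ (a + b) * Real.exp ((a - b) * x)) := by
  have h := blAux_beta_integrable ha hb
  rw [← blAux_image, integrableOn_image_iff_integrableOn_abs_deriv_smul MeasurableSet.univ
    (fun x _ => (blAux_deriv x).hasDerivWithinAt) blAux_inj] at h
  simp only [blAux_integrand, integrableOn_univ] at h
  have h2 := h.const_mul ((2 : ℝ) ^ (1 - (a + b)))⁻¹
  refine h2.congr (Filter.Eventually.of_forall fun x => ?_)
  have : (0 : ℝ) < 2 ^ (1 - (a + b)) := by positivity
  simp only
  field_simp

lemma blAux_integral {a b : ℝ} (ha : 0 < a) (hb : 0 < b) :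
    (2 : ℝ) ^ (1 - (a + b)) * ∫ x : ℝ, sech x ^ (a + b) * Real.exp ((a - b) * x) =
      Real.Gamma a * Real.Gamma b / Real.Gamma (a + b) := by
  rw [← blAux_beta_integral ha hb, ← blAux_image, integral_image_eq_integral_abs_deriv_smul
    MeasurableSet.univ (fun x _ => (blAux_deriv x).hasDerivWithinAt) blAux_inj]
  simp only [blAux_integrand, Measure.restrict_univ, integral_const_mul]

/-- The base measure with density `sech ^ c`. -/
noncomputable def blAux_meas (c : ℝ) : Measure ℝ :=
  volume.withDensity (fun x => ENNReal.ofReal (sech x ^ c))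

lemma blAux_measurable (c : ℝ) : Measurable (fun x => ENNReal.ofReal (sech x ^ c)) := by
  unfold sech
  have := Real.measurable_cosh
  fun_prop

lemma blAux_integrable_meas (c : ℝ) (g : ℝ → ℝ) :
    Integrable g (blAux_meas c) ↔ Integrable (fun x => sech x ^ c * g x) := by
  unfold blAux_meas
  rw [integrable_withDensity_iff_integrable_smul' (blAux_measurable c) (by simp)]
  refine iff_of_eq (congrArg (fun f => Integrable f volume) (funext fun x => ?_))
  rw [ENNReal.toReal_ofReal (Real.rpow_nonneg (blAux_sech_pos x).le _), smul_eq_mul]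

lemma blAux_integral_meas (c : ℝ) (g : ℝ → ℝ) :
    ∫ x, g x ∂(blAux_meas c) = ∫ x, sech x ^ c * g x := by
  unfold blAux_meas
  rw [integral_withDensity_eq_integral_toReal_smul (blAux_measurable c) (by simp)]
  refine integral_congr_ae (Filter.Eventually.of_forall fun x => ?_)
  simp only
  rw [ENNReal.toReal_ofReal (Real.rpow_nonneg (blAux_sech_pos x).le _), smul_eq_mul]

lemma blAux_mem (c t : ℝ) (h1 : 0 < c + t) (h2 : 0 < c - t) :
    t ∈ integrableExpSet id (blAux_meas c) := by
  show Integrable _ _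
  rw [blAux_integrable_meas]
  have := blAux_integrable (a := (c + t) / 2) (b := (c - t) / 2) (by linarith) (by linarith)
  have e1 : (c + t) / 2 + (c - t) / 2 = c := by ring
  have e2 : (c + t) / 2 - (c - t) / 2 = t := by ring
  rw [e1, e2] at this
  exact this

lemma blAux_mem_interior (c t : ℝ) (h1 : 0 < c + t) (h2 : 0 < c - t) :
    t ∈ interior (integrableExpSet id (blAux_meas c)) := by
  refine mem_interior.2 ⟨Ioo (-c) c, fun s hs => blAux_mem c s ?_ ?_, isOpen_Ioo, ?_, ?_⟩
  · linarith [hs.1]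
  · linarith [hs.2]
  · linarith
  · linarith

lemma blAux_analyticAt {x : ℝ} (hx : 0 < x) :
    AnalyticAt ℝ (fun x => Real.log (Real.Gamma x)) x := by
  have hC : AnalyticAt ℂ Complex.Gamma x := by
    have hopen : IsOpen {z : ℂ | 0 < z.re} := isOpen_lt continuous_const Complex.continuous_re
    have hd : DifferentiableOn ℂ Complex.Gamma {z : ℂ | 0 < z.re} := fun z hz =>
      (Complex.differentiableAt_Gamma z (fun m hm => by
        have hz' : 0 < z.re := hz
        rw [hm] at hz'
        simp at hz'
        have : (0 : ℝ) ≤ m := m.cast_nonneg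
        linarith)).differentiableWithinAt
    exact hd.analyticAt (hopen.mem_nhds (by simpa using hx))
  have h2 : AnalyticAt ℝ Real.Gamma x := hC.re_ofReal
  exact h2.log (Real.Gamma_pos_of_pos hx)

/-- Iterated derivatives of `log Γ`. -/
noncomputable def blAux_L (n : ℕ) : ℝ → ℝ := iteratedDeriv n (fun x => Real.log (Real.Gamma x))

lemma blAux_hasDerivAt_L {x : ℝ} (hx : 0 < x) (n : ℕ) :
    HasDerivAt (blAux_L n) (blAux_L (n + 1) x) x := by
  unfold blAux_L
  rw [iteratedDeriv_succ]
  refine DifferentiableAt.hasDerivAt ?_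
  rw [iteratedDeriv_eq_iterate]
  exact ((blAux_analyticAt hx).iterated_deriv n).differentiableAt

lemma blAux_hasDerivAt_add {c t : ℝ} (h1 : 0 < c + t) (n : ℕ) :
    HasDerivAt (fun t => blAux_L n ((c + t) / 2)) (blAux_L (n + 1) ((c + t) / 2) / 2) t := by
  have := (blAux_hasDerivAt_L (x := (c + t) / 2) (by linarith) n).comp t
    (((hasDerivAt_id t).const_add c).div_const 2)
  refine this.congr_deriv ?_
  ring

lemma blAux_hasDerivAt_sub {c t : ℝ} (h1 : 0 < c - t) (n : ℕ) :
    HasDerivAt (fun t => blAux_L n ((c - t) / 2)) (-(blAux_L (n + 1) ((c - t) / 2)) / 2) t := by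
  have := (blAux_hasDerivAt_L (x := (c - t) / 2) (by linarith) n).comp t
    (((hasDerivAt_id t).const_sub c).div_const 2)
  refine this.congr_deriv ?_
  ring

/-- Unnormalised moments. -/
noncomputable def blAux_F (c : ℝ) (n : ℕ) (t : ℝ) : ℝ :=
  ∫ x, x ^ n * Real.exp (t * x) ∂(blAux_meas c)

lemma blAux_hasDerivAt_F {c t : ℝ} (h1 : 0 < c + t) (h2 : 0 < c - t) (n : ℕ) :
    HasDerivAt (blAux_F c n) (blAux_F c (n + 1) t) t :=
  hasDerivAt_integral_pow_mul_exp_real (blAux_mem_interior c t h1 h2) n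

lemma blAux_F_zero {c t : ℝ} (h1 : 0 < c + t) (h2 : 0 < c - t) :
    (2 : ℝ) ^ (1 - c) * blAux_F c 0 t =
      Real.Gamma ((c + t) / 2) * Real.Gamma ((c - t) / 2) / Real.Gamma c := by
  have := blAux_integral (a := (c + t) / 2) (b := (c - t) / 2) (by linarith) (by linarith)
  have e1 : (c + t) / 2 + (c - t) / 2 = c := by ring
  have e2 : (c + t) / 2 - (c - t) / 2 = t := by ring
  rw [e1, e2] at this
  rw [← this, blAux_F, blAux_integral_meas]
  simp

lemma blAux_F_zero' {c t : ℝ} (h1 : 0 < c + t) (h2 : 0 < c - t) :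
    blAux_F c 0 t = (((2 : ℝ) ^ (1 - c))⁻¹ / Real.Gamma c) *
      Real.exp (blAux_L 0 ((c + t) / 2) + blAux_L 0 ((c - t) / 2)) := by
  have h := blAux_F_zero h1 h2
  have hp : (0 : ℝ) < 2 ^ (1 - c) := by positivity
  simp only [blAux_L, iteratedDeriv_zero]
  rw [Real.exp_add, Real.exp_log (Real.Gamma_pos_of_pos (by linarith)),
    Real.exp_log (Real.Gamma_pos_of_pos (by linarith))]
  have h3 : blAux_F c 0 t = ((2 : ℝ) ^ (1 - c))⁻¹ * ((2 : ℝ) ^ (1 - c) * blAux_F c 0 t) := by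
    field_simp
  rw [h3, h]
  ring

lemma blAux_nhds {c t : ℝ} (h1 : 0 < c + t) (h2 : 0 < c - t) :
    ∀ᶠ s in nhds t, 0 < c + s ∧ 0 < c - s := by
  have : Ioo (-c) c ∈ nhds t := Ioo_mem_nhds (by linarith) (by linarith)
  filter_upwards [this] with s hs
  exact ⟨by linarith [hs.1], by linarith [hs.2]⟩

lemma blAux_F_one {c t : ℝ} (h1 : 0 < c + t) (h2 : 0 < c - t) :
    blAux_F c 1 t = blAux_F c 0 t *
      ((blAux_L 1 ((c + t) / 2) - blAux_L 1 ((c - t) / 2)) / 2) := by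
  have hd := (((blAux_hasDerivAt_add h1 0).add (blAux_hasDerivAt_sub h2 0)).exp).const_mul
    (((2 : ℝ) ^ (1 - c))⁻¹ / Real.Gamma c)
  have hd' : HasDerivAt (blAux_F c 0) _ t := hd.congr_of_eventuallyEq (by
    filter_upwards [blAux_nhds h1 h2] with s hs
    exact blAux_F_zero' hs.1 hs.2)
  rw [(blAux_hasDerivAt_F h1 h2 0).unique hd', blAux_F_zero' h1 h2]
  simp only [Pi.add_apply, zero_add]
  ring

lemma blAux_K1 {c t : ℝ} (h1 : 0 < c + t) (h2 : 0 < c - t) :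
    HasDerivAt (fun t => (blAux_L 1 ((c + t) / 2) - blAux_L 1 ((c - t) / 2)) / 2)
      ((blAux_L 2 ((c + t) / 2) + blAux_L 2 ((c - t) / 2)) / 4) t := by
  refine (((blAux_hasDerivAt_add h1 1).sub (blAux_hasDerivAt_sub h2 1)).div_const 2).congr_deriv ?_
  ring

lemma blAux_K2 {c t : ℝ} (h1 : 0 < c + t) (h2 : 0 < c - t) :
    HasDerivAt (fun t => (blAux_L 2 ((c + t) / 2) + blAux_L 2 ((c - t) / 2)) / 4)
      ((blAux_L 3 ((c + t) / 2) - blAux_L 3 ((c - t) / 2)) / 8) t := by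
  refine (((blAux_hasDerivAt_add h1 2).add (blAux_hasDerivAt_sub h2 2)).div_const 4).congr_deriv ?_
  ring

lemma blAux_F_two {c t : ℝ} (h1 : 0 < c + t) (h2 : 0 < c - t) :
    blAux_F c 2 t =
      blAux_F c 1 t * ((blAux_L 1 ((c + t) / 2) - blAux_L 1 ((c - t) / 2)) / 2) +
      blAux_F c 0 t * ((blAux_L 2 ((c + t) / 2) + blAux_L 2 ((c - t) / 2)) / 4) := by
  have hd := (blAux_hasDerivAt_F h1 h2 0).mul (blAux_K1 h1 h2)
  have hd' : HasDerivAt (blAux_F c 1) _ t := hd.congr_of_eventuallyEq (by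
    filter_upwards [blAux_nhds h1 h2] with s hs
    exact blAux_F_one hs.1 hs.2)
  exact (blAux_hasDerivAt_F h1 h2 1).unique hd'

lemma blAux_F_three {c t : ℝ} (h1 : 0 < c + t) (h2 : 0 < c - t) :
    blAux_F c 3 t =
      (blAux_F c 2 t * ((blAux_L 1 ((c + t) / 2) - blAux_L 1 ((c - t) / 2)) / 2) +
      blAux_F c 1 t * ((blAux_L 2 ((c + t) / 2) + blAux_L 2 ((c - t) / 2)) / 4)) +
      (blAux_F c 1 t * ((blAux_L 2 ((c + t) / 2) + blAux_L 2 ((c - t) / 2)) / 4) +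
      blAux_F c 0 t * ((blAux_L 3 ((c + t) / 2) - blAux_L 3 ((c - t) / 2)) / 8)) := by
  have hd := ((blAux_hasDerivAt_F h1 h2 1).mul (blAux_K1 h1 h2)).add
    ((blAux_hasDerivAt_F h1 h2 0).mul (blAux_K2 h1 h2))
  have hd' : HasDerivAt (blAux_F c 2) _ t := hd.congr_of_eventuallyEq (by
    filter_upwards [blAux_nhds h1 h2] with s hs
    exact blAux_F_two hs.1 hs.2)
  exact (blAux_hasDerivAt_F h1 h2 2).unique hd'

lemma blAux_central {c t : ℝ} (h1 : 0 < c + t) (h2 : 0 < c - t) (m : ℝ) :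
    ∫ x, (x - m) ^ 3 * Real.exp (t * x) ∂(blAux_meas c) =
      blAux_F c 3 t - 3 * m * blAux_F c 2 t + 3 * m ^ 2 * blAux_F c 1 t - m ^ 3 * blAux_F c 0 t := by
  have hi (n : ℕ) : Integrable (fun x : ℝ => x ^ n * Real.exp (t * x)) (blAux_meas c) :=
    integrable_pow_mul_exp_of_mem_interior_integrableExpSet (blAux_mem_interior c t h1 h2) n
  unfold blAux_F
  have i1 : Integrable (fun x : ℝ => x ^ 3 * Real.exp (t * x) -
      3 * m * (x ^ 2 * Real.exp (t * x))) (blAux_meas c) := (hi 3).sub ((hi 2).const_mul _)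
  have i2 : Integrable (fun x : ℝ => x ^ 3 * Real.exp (t * x) -
      3 * m * (x ^ 2 * Real.exp (t * x)) + 3 * m ^ 2 * (x ^ 1 * Real.exp (t * x)))
      (blAux_meas c) := i1.add ((hi 1).const_mul _)
  rw [← integral_const_mul, ← integral_const_mul, ← integral_const_mul,
    ← integral_sub (hi 3) ((hi 2).const_mul _), ← integral_add i1 ((hi 1).const_mul _),
    ← integral_sub i2 ((hi 0).const_mul _)]
  refine integral_congr_ae (Filter.Eventually.of_forall fun x => ?_)
  simp only
  ring

end

/-- The third central moment of the beta-logistic distribution is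
`(1/8)(ψ''((θ¹+θ²)/2) − ψ''((θ¹−θ²)/2))`, where
`μ = (1/2)(ψ((θ¹+θ²)/2) − ψ((θ¹−θ²)/2))` is the mean. -/
theorem betaLogistic_third_central_moment (θ1 θ2 μ : ℝ) (h1 : 0 < θ1 + θ2) (h2 : 0 < θ1 - θ2)
    (hμ : μ = (1 / 2) * (digamma ((θ1 + θ2) / 2) - digamma ((θ1 - θ2) / 2))) :
    (∫ x : ℝ, (x - μ) ^ 3 * betaLogisticPDF θ1 θ2 x) =
      (1 / 8) * (tetragamma ((θ1 + θ2) / 2) - tetragamma ((θ1 - θ2) / 2)) := by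
  have hd : ∀ z, digamma z = blAux_L 1 z := fun z => by
    simp only [digamma, blAux_L, iteratedDeriv_one]
  have ht : ∀ z, tetragamma z = blAux_L 3 z := fun z => rfl
  rw [hd, hd] at hμ
  rw [ht, ht]
  have hpdf : ∀ x, (x - μ) ^ 3 * betaLogisticPDF θ1 θ2 x =
      ((2 : ℝ) ^ (1 - θ1) /
        (Real.Gamma ((θ1 - θ2) / 2) * Real.Gamma ((θ1 + θ2) / 2) / Real.Gamma θ1)) *
      (sech x ^ θ1 * ((x - μ) ^ 3 * Real.exp (θ2 * x))) := fun x => by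
    unfold betaLogisticPDF
    ring
  simp only [hpdf]
  rw [integral_const_mul, ← blAux_integral_meas, blAux_central h1 h2]
  have h0 := blAux_F_zero h1 h2
  have hG : 0 < Real.Gamma ((θ1 + θ2) / 2) * Real.Gamma ((θ1 - θ2) / 2) / Real.Gamma θ1 :=
    div_pos (mul_pos (Real.Gamma_pos_of_pos (by linarith)) (Real.Gamma_pos_of_pos (by linarith)))
      (Real.Gamma_pos_of_pos (by linarith))
  rw [mul_comm (Real.Gamma ((θ1 - θ2) / 2)), ← h0]
  rw [← h0] at hG
  have hp : (0 : ℝ) < 2 ^ (1 - θ1) := by positivity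
  have hF : blAux_F θ1 0 θ2 ≠ 0 := by
    intro h
    rw [h] at hG
    simp at hG
  rw [blAux_F_three h1 h2, blAux_F_two h1 h2, blAux_F_one h1 h2]
  have hm : (blAux_L 1 ((θ1 + θ2) / 2) - blAux_L 1 ((θ1 - θ2) / 2)) / 2 = μ := by
    rw [hμ]; ring
  rw [hm]
  field_simp
  ring
end

section
/- For every natural number n and every real x, the n-th Euler polynomial satisfies E_n(x) = ∫_{ℝ} (x + i t − 1/2)^n · sech(π t) dt, where the integral is a convergent complex-valued integral over the real line. -/
open MeasureTheory

/-- The `n`-th Bernoulli polynomial evaluated at a real `x`. -/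
noncomputable def bernoulliPoly (n : ℕ) (x : ℝ) : ℝ :=
  Polynomial.aeval x (Polynomial.bernoulli n)

/-- The `n`-th Euler polynomial evaluated at a real `x`, via
`Eₙ(x) = (2^{n+1}/(n+1)) (B_{n+1}((x+1)/2) − B_{n+1}(x/2))` (generating function
`Σ Eₙ(x) tⁿ/n! = 2e^{xt}/(eᵗ + 1)`). -/
noncomputable def eulerPoly (n : ℕ) (x : ℝ) : ℝ :=
  (2 : ℝ) ^ (n + 1) / (n + 1) *
    (bernoulliPoly (n + 1) ((x + 1) / 2) - bernoulliPoly (n + 1) (x / 2))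

open Polynomial in
lemma poly_growth (p : ℂ[X]) : ∃ K : ℝ, 0 ≤ K ∧ ∀ z : ℂ, ‖p.eval z‖ ≤ K * Real.exp ‖z‖ := by
  refine ⟨∑ k ∈ Finset.range (p.natDegree + 1), ‖p.coeff k‖ * (k.factorial : ℝ),
    Finset.sum_nonneg fun _ _ => by positivity, fun z => ?_⟩
  rw [eval_eq_sum_range, Finset.sum_mul]
  refine (norm_sum_le _ _).trans (Finset.sum_le_sum fun k _ => ?_)
  rw [norm_mul, norm_pow, mul_assoc]
  have h := Real.pow_div_factorial_le_exp ‖z‖ (norm_nonneg _) k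
  rw [div_le_iff₀ (by positivity)] at h
  exact mul_le_mul_of_nonneg_left (by linarith) (norm_nonneg _)

lemma integrable_exp_neg_abs' : Integrable (fun t : ℝ => Real.exp (-|t|)) := by
  rw [← integrableOn_univ, ← Set.Iic_union_Ioi (a := (0:ℝ))]
  refine IntegrableOn.union ?_ ?_
  · refine (integrableOn_exp_Iic 0).congr_fun (fun t ht => ?_) measurableSet_Iic
    simp [abs_of_nonpos (show t ≤ 0 from ht)]
  · refine (integrableOn_exp_neg_Ioi 0).congr_fun (fun t ht => ?_) measurableSet_Ioi
    simp [abs_of_pos (show 0 < t from ht)]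

lemma sech_nonneg' (t : ℝ) : 0 ≤ sech t := by
  unfold sech; have := Real.cosh_pos t; positivity

lemma sech_le' (t : ℝ) : sech (Real.pi * t) ≤ 2 * Real.exp (-(2 * |t|)) := by
  unfold sech
  rw [← Real.cosh_abs, abs_mul, abs_of_pos Real.pi_pos, div_le_iff₀ (Real.cosh_pos _),
    Real.cosh_eq]
  have h1 : Real.exp (2 * |t|) ≤ Real.exp (Real.pi * |t|) :=
    Real.exp_le_exp.2 (mul_le_mul_of_nonneg_right Real.two_le_pi (abs_nonneg t))
  have h2 := Real.exp_pos (-(Real.pi * |t|))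
  have h3 : Real.exp (-(2 * |t|)) * Real.exp (2 * |t|) = 1 := by
    rw [← Real.exp_add]; simp
  have h4 := Real.exp_pos (-(2 * |t|))
  nlinarith

lemma continuous_sech' : Continuous sech := by
  unfold sech
  exact continuous_const.div Real.continuous_cosh fun x => (Real.cosh_pos x).ne'

open Polynomial in
lemma integrable_poly_sech (p : ℂ[X]) (c : ℂ) : Integrable (fun t : ℝ =>
    p.eval (Complex.I * t + c) * ((sech (Real.pi * t) : ℝ) : ℂ)) := by
  obtain ⟨K, hK, hp⟩ := poly_growth p
  refine (integrable_exp_neg_abs'.const_mul (2 * K * Real.exp ‖c‖)).mono' ?_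
    (Filter.Eventually.of_forall fun t => ?_)
  · have := continuous_sech'
    have := p.continuous
    exact Continuous.aestronglyMeasurable (by fun_prop)
  · rw [norm_mul, Complex.norm_real, Real.norm_of_nonneg (sech_nonneg' _)]
    have h1 : ‖p.eval (Complex.I * t + c)‖ ≤ K * Real.exp (|t| + ‖c‖) := by
      refine (hp _).trans (mul_le_mul_of_nonneg_left (Real.exp_le_exp.2 ?_) hK)
      refine (norm_add_le _ _).trans ?_
      simp
    calc _ ≤ (K * Real.exp (|t| + ‖c‖)) * (2 * Real.exp (-(2 * |t|))) :=
          mul_le_mul h1 (sech_le' t) (sech_nonneg' _) (by positivity)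
      _ = 2 * K * Real.exp ‖c‖ * Real.exp (-|t|) := by
          rw [Real.exp_add, show -|t| = |t| + -(2 * |t|) by ring, Real.exp_add]; ring

lemma integral_sech' : ∫ t : ℝ, sech (Real.pi * t) = 1 := by
  have hint : Integrable (fun t : ℝ => sech (Real.pi * t)) := by
    have h := (integrable_poly_sech 1 0).re
    simpa using h
  have htop : Filter.Tendsto Real.sinh Filter.atTop Filter.atTop :=
    Real.sinhOrderIso.tendsto_atTop
  have hbot : Filter.Tendsto Real.sinh Filter.atBot Filter.atBot :=
    Real.sinhOrderIso.tendsto_atBot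
  have hd : ∀ t : ℝ, HasDerivAt (fun t => Real.pi⁻¹ * Real.arctan (Real.sinh (Real.pi * t)))
      (sech (Real.pi * t)) t := by
    intro t
    have h := ((((hasDerivAt_id t).const_mul Real.pi).sinh).arctan).const_mul Real.pi⁻¹
    refine h.congr_deriv ?_
    have h1 := Real.cosh_sq (Real.pi * t)
    have h2 := Real.cosh_pos (Real.pi * t)
    have h3 := Real.pi_pos
    simp only [sech, id]
    rw [add_comm 1, ← h1]
    field_simp
  have m1 : Filter.Tendsto (fun t : ℝ => Real.pi * t) Filter.atTop Filter.atTop :=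
    Filter.tendsto_id.const_mul_atTop Real.pi_pos
  have m2 : Filter.Tendsto (fun t : ℝ => Real.pi * t) Filter.atBot Filter.atBot :=
    Filter.tendsto_id.const_mul_atBot Real.pi_pos
  have t1 := ((Real.tendsto_arctan_atTop.mono_right nhdsWithin_le_nhds).comp
    (htop.comp m1)).const_mul Real.pi⁻¹
  have t2 := ((Real.tendsto_arctan_atBot.mono_right nhdsWithin_le_nhds).comp
    (hbot.comp m2)).const_mul Real.pi⁻¹
  rw [integral_of_hasDerivAt_of_tendsto hd hint t2 t1]
  have h3 := Real.pi_pos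
  field_simp
  norm_num

/-- `sin (π z) / z`, continued to `0`. -/
noncomputable def sinQuot (z : ℂ) : ℂ := dslope (fun z : ℂ => Complex.sin (Real.pi * z)) 0 z

lemma sinQuot_mul (z : ℂ) : z * sinQuot z = Complex.sin (Real.pi * z) := by
  have := sub_smul_dslope (fun z : ℂ => Complex.sin (Real.pi * z)) 0 z
  simpa [sinQuot] using this

lemma differentiable_sinQuot : Differentiable ℂ sinQuot := by
  have : DifferentiableOn ℂ (dslope (fun z : ℂ => Complex.sin (Real.pi * z)) 0) Set.univ := by
    rw [Complex.differentiableOn_dslope Filter.univ_mem]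
    fun_prop
  exact differentiableOn_univ.1 this

lemma sinQuot_ne_zero (z : ℂ) (h1 : -1 < z.re) (h2 : z.re < 1) : sinQuot z ≠ 0 := by
  by_cases hz : z = 0
  · subst hz
    have h : HasDerivAt (fun z : ℂ => Complex.sin (Real.pi * z)) Real.pi 0 := by
      have := ((hasDerivAt_id (0:ℂ)).const_mul (Real.pi : ℂ)).csin
      simpa using this
    rw [sinQuot, dslope_same, h.deriv]
    exact_mod_cast Real.pi_ne_zero
  · intro h
    have h3 := sinQuot_mul z
    rw [h, mul_zero, eq_comm, Complex.sin_eq_zero_iff] at h3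
    obtain ⟨k, hk⟩ := h3
    have hz' : z = k := by
      rw [mul_comm] at hk
      exact mul_right_cancel₀ (by exact_mod_cast Real.pi_ne_zero) hk
    rw [hz'] at h1 h2 hz
    simp only [Complex.intCast_re] at h1 h2
    have a : -1 < k := by exact_mod_cast h1
    have b : k < 1 := by exact_mod_cast h2
    have : k = 0 := by omega
    simp [this] at hz

lemma norm_sin_ge (s T : ℝ) : Real.sinh (Real.pi * |T|) ≤
    ‖Complex.sin (Real.pi * ((s : ℂ) + T * Complex.I))‖ := by
  have e : Complex.sin (Real.pi * ((s : ℂ) + T * Complex.I)) =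
      ((Real.sin (Real.pi * s) * Real.cosh (Real.pi * T) : ℝ) : ℂ) +
      ((Real.cos (Real.pi * s) * Real.sinh (Real.pi * T) : ℝ) : ℂ) * Complex.I := by
    rw [show (Real.pi : ℂ) * ((s : ℂ) + T * Complex.I) =
      (Real.pi * s : ℂ) + (Real.pi * T : ℂ) * Complex.I by ring, Complex.sin_add_mul_I]
    push_cast; ring
  rw [e, Complex.norm_add_mul_I]
  apply Real.le_sqrt_of_sq_le
  have h1 : Real.sinh (Real.pi * |T|) ^ 2 = Real.sinh (Real.pi * T) ^ 2 := by
    rcases abs_choice T with h | h <;> rw [h]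
    rw [mul_neg, Real.sinh_neg, neg_sq]
  have h2 := Real.cosh_sq (Real.pi * T)
  have h3 := Real.sin_sq_add_cos_sq (Real.pi * s)
  rw [h1, mul_pow, mul_pow, h2]
  nlinarith [sq_nonneg (Real.sin (Real.pi * s)), sq_nonneg (Real.sinh (Real.pi * T))]

lemma sinh_ge' (T : ℝ) (hT : 1 ≤ T) : Real.exp (2 * T) / 4 ≤ Real.sinh (Real.pi * T) := by
  rw [Real.sinh_eq]
  have h1 : Real.exp (2 * T) ≤ Real.exp (Real.pi * T) :=
    Real.exp_le_exp.2 (mul_le_mul_of_nonneg_right Real.two_le_pi (by linarith))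
  have h2 : Real.exp (-(Real.pi * T)) ≤ 1 := Real.exp_le_one_iff.2 (by
    have := Real.pi_pos; nlinarith)
  have h3 := Real.add_one_le_exp (2 * T)
  linarith

lemma sin_left (t : ℝ) : Complex.sin (Real.pi * (Complex.I * t + (-1/2))) =
    -((Real.cosh (Real.pi * t) : ℝ) : ℂ) := by
  rw [show (Real.pi : ℂ) * (Complex.I * t + (-1/2)) =
    (Real.pi * t : ℂ) * Complex.I - Real.pi / 2 by ring, Complex.sin_sub_pi_div_two,
    Complex.cos_mul_I]
  push_cast; ring

lemma sin_right (t : ℝ) : Complex.sin (Real.pi * (Complex.I * t + 1/2)) =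
    ((Real.cosh (Real.pi * t) : ℝ) : ℂ) := by
  rw [show (Real.pi : ℂ) * (Complex.I * t + 1/2) =
    (Real.pi * t : ℂ) * Complex.I + Real.pi / 2 by ring, Complex.sin_add_pi_div_two,
    Complex.cos_mul_I]
  push_cast; ring

open Polynomial in
/-- horizontal edges bound -/
lemma edge_bound (q : ℂ[X]) : ∃ K : ℝ, ∀ s T : ℝ, |s| ≤ 1/2 → 1 ≤ |T| →
    ‖q.eval ((s : ℂ) + T * Complex.I) / sinQuot ((s : ℂ) + T * Complex.I)‖ ≤
      K * Real.exp (-|T|) := by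
  obtain ⟨K, hK, hp⟩ := poly_growth (X * q)
  refine ⟨4 * K * Real.exp (1/2), fun s T hs hT => ?_⟩
  set z : ℂ := (s : ℂ) + T * Complex.I with hz
  have hz0 : z ≠ 0 := by
    intro h
    have := congrArg Complex.im h
    simp [hz] at this
    simp [this] at hT
    linarith
  have e : q.eval z / sinQuot z = (X * q).eval z / Complex.sin (Real.pi * z) := by
    rw [← sinQuot_mul, eval_mul, eval_X, mul_div_mul_left _ _ hz0]
  have hn : ‖z‖ ≤ 1/2 + |T| := by
    refine (norm_add_le _ _).trans ?_
    simp
    linarith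
  have h1 : ‖(X * q).eval z‖ ≤ K * Real.exp (1/2 + |T|) :=
    (hp z).trans (mul_le_mul_of_nonneg_left (Real.exp_le_exp.2 hn) hK)
  have h2 := (sinh_ge' |T| hT).trans (norm_sin_ge s T)
  rw [e, norm_div]
  have hpos := Real.exp_pos (2 * |T|)
  calc _ ≤ (K * Real.exp (1/2 + |T|)) / (Real.exp (2 * |T|) / 4) :=
        div_le_div₀ (by positivity) h1 (by positivity) h2
    _ = _ := by
        have h5 : Real.exp |T| = Real.exp (-|T|) * Real.exp (2 * |T|) := by
          rw [← Real.exp_add]; ring_nf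
        rw [div_eq_iff (by positivity), Real.exp_add, h5]
        ring

open Polynomial Filter Topology in
lemma contour (q : ℂ[X]) :
    ∫ t : ℝ, ((X * q).eval (Complex.I * t + 1/2) * ((sech (Real.pi * t) : ℝ) : ℂ) +
      (X * q).eval (Complex.I * t + (-1/2)) * ((sech (Real.pi * t) : ℝ) : ℂ)) = 0 := by
  set h : ℂ → ℂ := fun z => q.eval z / sinQuot z with hh
  have eqv (z c : ℂ) (hz : z ≠ 0) (hc : Complex.sin (Real.pi * z) = c) :
      h z = (X * q).eval z / c := by
    rw [← hc, ← sinQuot_mul, eval_mul, eval_X, mul_div_mul_left _ _ hz]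
  have eR (t : ℝ) : h (((1/2 : ℝ) : ℂ) + t * Complex.I) =
      (X * q).eval (Complex.I * t + 1/2) * ((sech (Real.pi * t) : ℝ) : ℂ) := by
    rw [show ((1/2 : ℝ) : ℂ) + t * Complex.I = Complex.I * t + 1/2 by push_cast; ring,
      eqv _ _ ?_ (sin_right t), sech]
    · push_cast; ring
    · intro h0; have := congrArg Complex.re h0; norm_num at this
  have eL (t : ℝ) : h (((-1/2 : ℝ) : ℂ) + t * Complex.I) =
      -((X * q).eval (Complex.I * t + (-1/2)) * ((sech (Real.pi * t) : ℝ) : ℂ)) := by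
    rw [show ((-1/2 : ℝ) : ℂ) + t * Complex.I = Complex.I * t + (-1/2) by push_cast; ring,
      eqv _ _ ?_ (sin_left t), sech]
    · push_cast; rw [div_neg]; ring
    · intro h0; have := congrArg Complex.re h0; norm_num at this
  have iR := integrable_poly_sech (X * q) (1/2)
  have iL := integrable_poly_sech (X * q) (-1/2)
  obtain ⟨K, hK⟩ := edge_bound q
  have rect (T : ℝ) : (∫ t in (-T)..T,
      ((X * q).eval (Complex.I * t + 1/2) * ((sech (Real.pi * t) : ℝ) : ℂ) +
      (X * q).eval (Complex.I * t + (-1/2)) * ((sech (Real.pi * t) : ℝ) : ℂ))) =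
      Complex.I * ((∫ s in (-1/2 : ℝ)..(1/2), h (s + ((-T : ℝ) : ℂ) * Complex.I)) -
        ∫ s in (-1/2 : ℝ)..(1/2), h (s + ((T : ℝ) : ℂ) * Complex.I)) := by
    have := Complex.integral_boundary_rect_eq_zero_of_differentiableOn h
      ⟨-1/2, -T⟩ ⟨1/2, T⟩ (fun z hz => by
        have hr := (Complex.mem_reProdIm.1 hz).1
        rw [Set.uIcc_of_le (by norm_num)] at hr
        have := sinQuot_ne_zero z (by linarith [hr.1]) (by linarith [hr.2])
        exact ((q.differentiable z).div (differentiable_sinQuot z) this).differentiableWithinAt)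
    simp only [eL, eR, smul_eq_mul, intervalIntegral.integral_neg] at this
    rw [intervalIntegral.integral_add iR.intervalIntegrable iL.intervalIntegrable]
    have hI := Complex.I_mul_I
    linear_combination (-Complex.I) * this + (∫ t in (-T)..T,
      ((X * q).eval (Complex.I * t + 1/2) * ((sech (Real.pi * t) : ℝ) : ℂ))) * hI + (∫ t in (-T)..T,
      ((X * q).eval (Complex.I * t + (-1/2)) * ((sech (Real.pi * t) : ℝ) : ℂ))) * hI
  have lim1 := intervalIntegral_tendsto_integral (iR.add iL) tendsto_neg_atTop_atBot tendsto_id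
  refine tendsto_nhds_unique lim1 ?_
  have hb (T : ℝ) (hT : 1 ≤ |T|) :
      ‖∫ s in (-1/2 : ℝ)..(1/2), h (s + (T : ℂ) * Complex.I)‖ ≤ K * Real.exp (-|T|) := by
    have := intervalIntegral.norm_integral_le_of_norm_le_const (a := (-1/2 : ℝ)) (b := 1/2)
      (f := fun s : ℝ => h (s + (T : ℂ) * Complex.I)) (C := K * Real.exp (-|T|)) (fun s hs => by
        rw [Set.uIoc_of_le (by norm_num)] at hs
        exact hK s T (abs_le.2 ⟨by linarith [hs.1], hs.2⟩) hT)
    norm_num at this ⊢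
    exact this
  have l2 : Tendsto (fun T : ℝ => 2 * (K * Real.exp (-T))) atTop (𝓝 0) := by
    have := (Real.tendsto_exp_neg_atTop_nhds_zero.const_mul K).const_mul 2
    simpa using this
  refine squeeze_zero_norm' ?_ l2
  filter_upwards [eventually_ge_atTop 1] with T hT
  have hT' : |T| = T := abs_of_nonneg (by linarith)
  have a := hb T (by rw [hT']; exact hT)
  have b := hb (-T) (by rw [abs_neg, hT']; exact hT)
  rw [abs_neg, hT'] at b
  rw [hT'] at a
  have := rect T
  simp only [id, Pi.add_apply]
  rw [this, norm_mul, Complex.norm_I, one_mul]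
  refine (norm_sub_le _ _).trans ?_
  linarith

open Polynomial in
lemma key (p : ℂ[X]) :
    ∫ t : ℝ, (p.eval (Complex.I * t + 1/2) + p.eval (Complex.I * t + (-1/2))) *
      ((sech (Real.pi * t) : ℝ) : ℂ) = 2 * p.eval 0 := by
  have hc := contour p.divX
  have hs : ∫ t : ℝ, ((sech (Real.pi * t) : ℝ) : ℂ) = 1 := by
    rw [integral_complex_ofReal, integral_sech']; simp
  have hi : Integrable (fun t : ℝ => ((sech (Real.pi * t) : ℝ) : ℂ)) := by
    simpa using integrable_poly_sech 1 0
  have e (z : ℂ) : p.eval z = (X * p.divX).eval z + p.eval 0 := by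
    conv_lhs => rw [← X_mul_divX_add p]
    simp [coeff_zero_eq_eval_zero]
  have := (integrable_poly_sech (X * p.divX) (1/2)).add
    (integrable_poly_sech (X * p.divX) (-1/2))
  have h2 := integral_add this (hi.const_mul (2 * p.eval 0))
  rw [integral_const_mul, hs] at h2
  simp only [Pi.add_apply] at h2
  rw [hc, zero_add, mul_one] at h2
  rw [← h2]
  congr 1
  ext t
  rw [e (Complex.I * t + 1/2), e (Complex.I * t + (-1/2))]
  ring

open Polynomial in
lemma bernoulli_aeval_one_add (n : ℕ) (z : ℂ) :
    aeval (1 + z) (Polynomial.bernoulli (n + 1)) =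
      aeval z (Polynomial.bernoulli (n + 1)) + (n + 1) * z ^ n := by
  have h := congrArg (aeval z) (bernoulli_comp_one_add_X (n + 1))
  rw [aeval_comp] at h
  simpa using h

/-- The Euler polynomial, shifted by `x`, over `ℂ`. -/
noncomputable def eulerC (n : ℕ) (x : ℂ) : Polynomial ℂ :=
  Polynomial.C ((2 : ℂ) ^ (n + 1) / (n + 1)) *
    (((Polynomial.bernoulli (n + 1)).map (algebraMap ℚ ℂ)).comp
        (Polynomial.C (1/2) * (Polynomial.X + Polynomial.C (x + 1))) -
      ((Polynomial.bernoulli (n + 1)).map (algebraMap ℚ ℂ)).comp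
        (Polynomial.C (1/2) * (Polynomial.X + Polynomial.C x)))

open Polynomial in
lemma eulerC_eval (n : ℕ) (x z : ℂ) : (eulerC n x).eval z = (2 : ℂ) ^ (n + 1) / (n + 1) *
    (aeval ((z + x + 1) / 2) (Polynomial.bernoulli (n + 1)) -
      aeval ((z + x) / 2) (Polynomial.bernoulli (n + 1))) := by
  simp only [eulerC, eval_mul, eval_C, eval_sub, eval_comp, eval_map_algebraMap, eval_add, eval_X]
  ring_nf

lemma eulerC_add (n : ℕ) (x z : ℂ) :
    (eulerC n x).eval (z + 1/2) + (eulerC n x).eval (z + (-1/2)) = 2 * (x + z - 1/2) ^ n := by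
  rw [eulerC_eval, eulerC_eval, show (z + 1/2 + x + 1) / 2 = 1 + (x + z - 1/2) / 2 by ring,
    bernoulli_aeval_one_add, show (z + -1/2 + x + 1) / 2 = (z + 1/2 + x) / 2 by ring,
    show (z + -1/2 + x) / 2 = (x + z - 1/2) / 2 by ring, div_pow]
  have h : (n : ℂ) + 1 ≠ 0 := by exact_mod_cast n.succ_ne_zero
  field_simp
  ring

lemma eulerC_zero (n : ℕ) (x : ℝ) : (eulerC n x).eval 0 = (eulerPoly n x : ℂ) := by
  have hb (y : ℝ) : ((bernoulliPoly (n + 1) y : ℝ) : ℂ) =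
      Polynomial.aeval (y : ℂ) (Polynomial.bernoulli (n + 1)) :=
    (Polynomial.aeval_algebraMap_apply ℂ y _).symm
  rw [eulerC_eval, eulerPoly]
  push_cast
  rw [hb, hb]
  push_cast
  simp

/-- The Euler polynomials as moments: for all `n : ℕ` and `x : ℝ`,
`Eₙ(x) = ∫ (x + it − 1/2)ⁿ sech(πt) dt`, the integral being convergent. -/
theorem eulerPoly_eq_moment (n : ℕ) (x : ℝ) :
    Integrable (fun t : ℝ =>
      ((x : ℂ) + Complex.I * t - 1 / 2) ^ n * ((sech (Real.pi * t) : ℝ) : ℂ)) ∧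
    (eulerPoly n x : ℂ) =
      ∫ t : ℝ, ((x : ℂ) + Complex.I * t - 1 / 2) ^ n * ((sech (Real.pi * t) : ℝ) : ℂ) := by
  constructor
  · have := integrable_poly_sech (Polynomial.X ^ n) (x - 1/2)
    refine this.congr (Filter.Eventually.of_forall fun t => ?_)
    simp only [Polynomial.eval_pow, Polynomial.eval_X]
    ring_nf
  · have h := key (eulerC n x)
    simp only [eulerC_add, mul_assoc] at h
    rw [integral_const_mul, eulerC_zero] at h
    exact (mul_left_cancel₀ two_ne_zero h).symm
end
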